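/- Let Θ be a real symplectic 2n×2n matrix (ΘᵀJΘ = J) acting ℂ-linearly on ℂ^{2n}, k ≥ 1 an integer, and ω ∈ ℂ a primitive k-th root of unity. On Σ^k × Σ^k with Σ = ℂ^{2n}, equipped with the symplectic form (−σ_ℂ)^{⊕k} ⊕ σ_ℂ^{⊕k}, consider the Lagrangian subspaces Π^{2k} = Π × ⋯ × Π (2k factors), Γ = {(ξ1,…,ξk, Θξ1,…,Θξk) : ξᵢ ∈ Σ}, and Δ^↺ = {(ξ1,…,ξk, ξ2, ξ3,…,ξk, ξ1) : ξᵢ ∈ Σ} (the graph of the cyclic shift). Then the Maslov form m(Π^{2k}, Γ, Δ^↺) is linearly isometric to the direct sum ⊕_{l=0}^{k−1} m(Π², Γ(ω^lΘ), Δ); in particular the negative Maslov indices satisfy i(Π^{2k}, Γ, Δ^↺) = Σ_{l=0}^{k−1} i(Π², Γ(ω^lΘ), Δ). -/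

import Mathlib

open scoped ComplexOrder

noncomputable section

/-- `ℂ^{2n}`, written with coordinates indexed by `Fin n ⊕ Fin n`
(first block = `q`-coordinates, second block = `p`-coordinates). -/
abbrev CV (n : ℕ) := (Fin n ⊕ Fin n) → ℂ

/-- The sesquilinear extension `σ_ℂ(X,Y) = σ(X̄,Y)` of the standard symplectic form
`σ(x,y) = ⟨Jx,y⟩`, `J = [[0,−I],[I,0]]`, to `ℂ^{2n}` (conjugate-linear in the first
argument). -/
def sigmaC (n : ℕ) : CV n →ₛₗ[starRingEnd ℂ] CV n →ₗ[ℂ] ℂ :=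
  LinearMap.mk₂'ₛₗ (starRingEnd ℂ) (RingHom.id ℂ)
    (fun x y => (∑ i : Fin n, (starRingEnd ℂ) (x (Sum.inl i)) * y (Sum.inr i)) -
      ∑ i : Fin n, (starRingEnd ℂ) (x (Sum.inr i)) * y (Sum.inl i))
    (by intro x x' y; simp [add_mul, Finset.sum_add_distrib]; ring)
    (by
      intro c x y
      simp only [Pi.smul_apply, smul_eq_mul, map_mul]
      rw [mul_sub, Finset.mul_sum, Finset.mul_sum]
      congr 1 <;> exact Finset.sum_congr rfl (by intros; ring))
    (by intro x y y'; simp [mul_add, Finset.sum_add_distrib]; ring)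
    (by
      intro c x y
      simp only [Pi.smul_apply, smul_eq_mul, RingHom.id_apply]
      rw [mul_sub, Finset.mul_sum, Finset.mul_sum]
      congr 1 <;> exact Finset.sum_congr rfl (by intros; ring))

/-- The orthogonal of a subspace with respect to a sesquilinear form. -/
def sesqOrth {W : Type*} [AddCommGroup W] [Module ℂ W]
    (f : W →ₛₗ[starRingEnd ℂ] W →ₗ[ℂ] ℂ) (L : Submodule ℂ W) : Submodule ℂ W where
  carrier := {u | ∀ w ∈ L, f u w = 0}
  add_mem' := by
    intro a b ha hb w hw
    simp [map_add, ha w hw, hb w hw]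
  zero_mem' := by
    intro w hw
    simp
  smul_mem' := by
    intro c u hu w hw
    simp [LinearMap.map_smulₛₗ, hu w hw]

/-- A complex subspace is Lagrangian for a sesquilinear form when it coincides with its
orthogonal. -/
def IsLagrangianC {W : Type*} [AddCommGroup W] [Module ℂ W]
    (f : W →ₛₗ[starRingEnd ℂ] W →ₗ[ℂ] ℂ) (L : Submodule ℂ W) : Prop :=
  L = sesqOrth f L

/-- Negative inertia index of the (Hermitian) Maslov form of a triple of complex
Lagrangian subspaces: the supremum of complex dimensions of subspaces of
`L1 ∩ (L0 + L2)` on which `m(l1) = σ_ℂ(l0,l2)` is negative definite (negativity in the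
complex order: real and `< 0`). -/
def maslovIndexC {W : Type*} [AddCommGroup W] [Module ℂ W]
    (f : W →ₛₗ[starRingEnd ℂ] W →ₗ[ℂ] ℂ) (L0 L1 L2 : Submodule ℂ W) : ℕ :=
  sSup {d : ℕ | ∃ S : Submodule ℂ W, S ≤ L1 ⊓ (L0 ⊔ L2) ∧
    (∀ v ∈ S, v ≠ 0 → ∀ l0 ∈ L0, ∀ l2 ∈ L2, v = l0 + l2 → f l0 l2 < 0) ∧
    Module.finrank ℂ ↥S = d}

/-- The direct sum of two sesquilinear forms on a product space. -/
def sesqProd {W1 W2 : Type*} [AddCommGroup W1] [Module ℂ W1] [AddCommGroup W2] [Module ℂ W2]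
    (f : W1 →ₛₗ[starRingEnd ℂ] W1 →ₗ[ℂ] ℂ) (g : W2 →ₛₗ[starRingEnd ℂ] W2 →ₗ[ℂ] ℂ) :
    (W1 × W2) →ₛₗ[starRingEnd ℂ] (W1 × W2) →ₗ[ℂ] ℂ :=
  LinearMap.mk₂'ₛₗ (starRingEnd ℂ) (RingHom.id ℂ)
    (fun x y => f x.1 y.1 + g x.2 y.2)
    (by intro x x' y; simp [map_add]; ring)
    (by intro c x y; simp [LinearMap.map_smulₛₗ, smul_eq_mul, mul_add])
    (by intro x y y'; simp [map_add]; ring)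
    (by intro c x y; simp [smul_eq_mul, mul_add])

/-- The direct sum of `k` copies of a sesquilinear form. -/
def sesqPi {W : Type*} [AddCommGroup W] [Module ℂ W] (k : ℕ)
    (f : W →ₛₗ[starRingEnd ℂ] W →ₗ[ℂ] ℂ) :
    (Fin k → W) →ₛₗ[starRingEnd ℂ] (Fin k → W) →ₗ[ℂ] ℂ :=
  LinearMap.mk₂'ₛₗ (starRingEnd ℂ) (RingHom.id ℂ)
    (fun x y => ∑ i, f (x i) (y i))
    (by intro x x' y; simp [map_add, Finset.sum_add_distrib])
    (by intro c x y; simp [LinearMap.map_smulₛₗ, Finset.mul_sum])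
    (by intro x y y'; simp [map_add, Finset.sum_add_distrib])
    (by intro c x y; simp [Finset.mul_sum])

/-- The vertical Lagrangian subspace `Π = {(p,0)} ⊂ ℂ^{2n}`. -/
def PiV (n : ℕ) : Submodule ℂ (CV n) where
  carrier := {x | ∀ i, x (Sum.inr i) = 0}
  add_mem' := by intro a b ha hb i; simp [ha i, hb i]
  zero_mem' := by intro i; simp
  smul_mem' := by intro c x hx i; simp [hx i]

/-- The standard symplectic matrix `J = [[0,−I],[I,0]]`. -/
def symplJ (n : ℕ) : Matrix (Fin n ⊕ Fin n) (Fin n ⊕ Fin n) ℝ :=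
  Matrix.fromBlocks 0 (-1) 1 0

/-- The `ℂ`-linear action on `ℂ^{2n}` of a real `2n×2n` matrix. -/
def cAction {n : ℕ} (Θ : Matrix (Fin n ⊕ Fin n) (Fin n ⊕ Fin n) ℝ) : CV n →ₗ[ℂ] CV n :=
  (Θ.map (Complex.ofReal)).mulVecLin


/-- The form `(−σ_ℂ) ⊕ σ_ℂ` on `ℂ^{2n} × ℂ^{2n}`. -/
def sigma2C (n : ℕ) :
    (CV n × CV n) →ₛₗ[starRingEnd ℂ] (CV n × CV n) →ₗ[ℂ] ℂ :=
  sesqProd (-(sigmaC n)) (sigmaC n)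

/-- The form `(−σ_ℂ)^{⊕k} ⊕ σ_ℂ^{⊕k}` on `Σ^k × Σ^k`, `Σ = ℂ^{2n}`. -/
def bigSigmaC (n k : ℕ) :
    ((Fin k → CV n) × (Fin k → CV n)) →ₛₗ[starRingEnd ℂ]
      ((Fin k → CV n) × (Fin k → CV n)) →ₗ[ℂ] ℂ :=
  sesqProd (-(sesqPi k (sigmaC n))) (sesqPi k (sigmaC n))

/-- The Lagrangian subspace `Π² = Π × Π` of `ℂ^{2n} × ℂ^{2n}`. -/
def Pi2Sub (n : ℕ) : Submodule ℂ (CV n × CV n) := (PiV n).prod (PiV n)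

/-- The diagonal Lagrangian subspace `Δ = {(ξ,ξ)}` of `ℂ^{2n} × ℂ^{2n}`. -/
def DiaSub (n : ℕ) : Submodule ℂ (CV n × CV n) :=
  LinearMap.graph (LinearMap.id : CV n →ₗ[ℂ] CV n)

/-- The Lagrangian subspace `Π^{2k} = Π × ⋯ × Π` of `Σ^k × Σ^k`. -/
def Pi2kSub (n k : ℕ) : Submodule ℂ ((Fin k → CV n) × (Fin k → CV n)) :=
  (Submodule.pi Set.univ fun _ : Fin k => PiV n).prod
    (Submodule.pi Set.univ fun _ : Fin k => PiV n)

/-- The graph `Γ = {(ξ1,…,ξk,Θξ1,…,Θξk)}` of the diagonal action of `Θ` on `Σ^k`. -/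
def GamSub (n k : ℕ) (Θ : Matrix (Fin n ⊕ Fin n) (Fin n ⊕ Fin n) ℝ) :
    Submodule ℂ ((Fin k → CV n) × (Fin k → CV n)) :=
  LinearMap.graph (LinearMap.pi fun i : Fin k => (cAction Θ).comp (LinearMap.proj i))

/-- The graph `Δ^↺ = {(ξ1,…,ξk,ξ2,…,ξk,ξ1)}` of the cyclic shift on `Σ^k`. -/
def DcycSub (n k : ℕ) [NeZero k] : Submodule ℂ ((Fin k → CV n) × (Fin k → CV n)) :=
  LinearMap.graph (LinearMap.funLeft ℂ (CV n) (fun i : Fin k => i + 1))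

/-!
Subtracting the two graph conditions, the domain of `m(P × P, Γ(M), Γ(T))` is identified with
`{x | M x - T x ∈ P}`, on which the form reads `σ (M x) (T x) - σ x x`. On `Σ^k` the unitary
discrete Fourier transform attached to `ω` is an isometry which commutes with `Θ` acting factorwise,
preserves `Π^k`, and turns the cyclic shift into multiplication of the `l`-th component by `ω^{-l}`.
It therefore carries the form of `(Π^{2k}, Γ, Δ^↺)` to the direct sum of those of
`(Π², Γ(ω^l Θ), Δ)`. The negative index of a Hermitian form is the largest dimension of a negative
definite subspace and also the least number of linear conditions that make the form nonnegative;
the first description gives superadditivity on direct sums, the second subadditivity.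
-/

section NegIndex

variable {V V' E : Type*} [AddCommGroup V] [Module ℂ V] [AddCommGroup V'] [Module ℂ V']
  [AddCommGroup E] [Module ℂ E]

/-- A complex-valued function, in practice `v ↦ h v v` for a Hermitian form `h`, is negative
definite on the subspace `S`. -/
def IsNegDefOn (q : V → ℂ) (S : Submodule ℂ V) : Prop :=
  ∀ v ∈ S, v ≠ 0 → q v < 0

/-- The negative inertia index of `q`, in practice `q v = h v v` for a Hermitian form `h`: the
largest dimension of a subspace on which `q` is negative definite. The supremum is `0` when these
dimensions are unbounded, which finite-dimensionality excludes. -/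
def negIndex (q : V → ℂ) : ℕ :=
  sSup {d | ∃ S : Submodule ℂ V, IsNegDefOn q S ∧ Module.finrank ℂ S = d}

theorem maslovIndexC_eq_negIndex (f : V →ₛₗ[starRingEnd ℂ] V →ₗ[ℂ] ℂ) {L0 L1 L2 : Submodule ℂ V}
    {q : ↥(L1 ⊓ (L0 ⊔ L2)) → ℂ}
    (hq : ∀ v : ↥(L1 ⊓ (L0 ⊔ L2)), ∀ l0 ∈ L0, ∀ l2 ∈ L2, (v : V) = l0 + l2 → f l0 l2 = q v) :
    maslovIndexC f L0 L1 L2 = negIndex q := by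
  unfold maslovIndexC negIndex
  congr 1
  ext d
  constructor
  · rintro ⟨S, hS, hneg, rfl⟩
    refine ⟨S.comap (L1 ⊓ (L0 ⊔ L2)).subtype, fun v hv hv0 => ?_,
      (Submodule.comapSubtypeEquivOfLe hS).finrank_eq⟩
    obtain ⟨l0, h0, l2, h2, hsum⟩ := Submodule.mem_sup.1 v.2.2
    rw [← hq v l0 h0 l2 h2 hsum.symm]
    exact hneg v hv (by simpa using hv0) l0 h0 l2 h2 hsum.symm
  · rintro ⟨S, hneg, rfl⟩
    refine ⟨S.map (L1 ⊓ (L0 ⊔ L2)).subtype, Submodule.map_subtype_le _ _, ?_,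
      Submodule.finrank_map_subtype_eq _ S⟩
    rintro _ ⟨v, hv, rfl⟩ hv0 l0 h0 l2 h2 hsum
    rw [hq v l0 h0 l2 h2 hsum]
    exact hneg v hv (by simpa using hv0)

theorem finrank_le_of_isNegDefOn_of_nonneg_ker [FiniteDimensional ℂ E] {q : V → ℂ}
    {S : Submodule ℂ V} (hS : IsNegDefOn q S) (T : V →ₗ[ℂ] E) (hT : ∀ v, T v = 0 → 0 ≤ q v) :
    Module.finrank ℂ S ≤ Module.finrank ℂ E := by
  refine LinearMap.finrank_le_finrank_of_injective (f := T.domRestrict S)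
    (LinearMap.ker_eq_bot.1 (LinearMap.ker_eq_bot'.2 fun v hv => ?_))
  by_contra hv0
  exact (hT v hv).not_gt (hS v v.2 (by simpa using hv0))

theorem negIndex_congr (e : V ≃ₗ[ℂ] V') {q : V → ℂ} {q' : V' → ℂ} (hq : ∀ v, q' (e v) = q v) :
    negIndex q = negIndex q' := by
  unfold negIndex
  congr 1
  ext d
  constructor
  · rintro ⟨S, hS, rfl⟩
    refine ⟨S.map e.toLinearMap, ?_, e.finrank_map_eq S⟩
    rintro _ ⟨v, hv, rfl⟩ hv0
    exact (hq v).trans_lt (hS v hv (by simpa using hv0))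
  · rintro ⟨S, hS, rfl⟩
    refine ⟨S.map e.symm.toLinearMap, ?_, e.symm.finrank_map_eq S⟩
    rintro _ ⟨v, hv, rfl⟩ hv0
    have hv' : q' v = q (e.symm v) := by rw [← hq, e.apply_symm_apply]
    exact hv' ▸ hS v hv (by simpa using hv0)

variable [FiniteDimensional ℂ V]

theorem isGreatest_negIndex (q : V → ℂ) :
    IsGreatest {d | ∃ S : Submodule ℂ V, IsNegDefOn q S ∧ Module.finrank ℂ S = d} (negIndex q) := by
  have hbdd : BddAbove {d | ∃ S : Submodule ℂ V, IsNegDefOn q S ∧ Module.finrank ℂ S = d} := by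
    refine ⟨Module.finrank ℂ V, ?_⟩
    rintro _ ⟨S, -, rfl⟩
    exact S.finrank_le
  have hbot : IsNegDefOn q ⊥ := fun v hv hv0 => absurd ((Submodule.mem_bot ℂ).1 hv) hv0
  exact ⟨Nat.sSup_mem ⟨0, ⊥, hbot, finrank_bot ℂ V⟩ hbdd, fun _ hd => le_csSup hbdd hd⟩

theorem exists_isNegDefOn_finrank_eq_negIndex (q : V → ℂ) :
    ∃ S : Submodule ℂ V, IsNegDefOn q S ∧ Module.finrank ℂ S = negIndex q :=
  (isGreatest_negIndex q).1

theorem IsNegDefOn.finrank_le_negIndex {q : V → ℂ} {S : Submodule ℂ V} (hS : IsNegDefOn q S) :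
    Module.finrank ℂ S ≤ negIndex q :=
  (isGreatest_negIndex q).2 ⟨S, hS, rfl⟩

theorem finrank_le_negIndex_of_injective {q : V → ℂ} {T : E →ₗ[ℂ] V}
    (hT : Function.Injective T) (hneg : ∀ x, x ≠ 0 → q (T x) < 0) :
    Module.finrank ℂ E ≤ negIndex q := by
  rw [← LinearMap.finrank_range_of_inj hT]
  refine IsNegDefOn.finrank_le_negIndex ?_
  rintro _ ⟨x, rfl⟩ hx
  exact hneg x fun h => hx (by rw [h, map_zero])

theorem negIndex_le_finrank_of_nonneg_ker [FiniteDimensional ℂ E] {q : V → ℂ} (T : V →ₗ[ℂ] E)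
    (hT : ∀ v, T v = 0 → 0 ≤ q v) : negIndex q ≤ Module.finrank ℂ E := by
  obtain ⟨S, hS, hrank⟩ := exists_isNegDefOn_finrank_eq_negIndex q
  exact hrank ▸ finrank_le_of_isNegDefOn_of_nonneg_ker hS T hT

end NegIndex

section Hermitian

variable {V : Type*} [AddCommGroup V] [Module ℂ V] {h : V →ₛₗ[starRingEnd ℂ] V →ₗ[ℂ] ℂ}

theorem IsNegDefOn.apply_self_nonpos {S : Submodule ℂ V} (hS : IsNegDefOn (fun v => h v v) S)
    {v : V} (hv : v ∈ S) : h v v ≤ 0 := by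
  rcases eq_or_ne v 0 with rfl | hv0
  · simp
  · exact (hS v hv hv0).le

theorem isNegDefOn_span_singleton {v : V} (hv : h v v < 0) :
    IsNegDefOn (fun v => h v v) (Submodule.span ℂ {v}) := by
  intro w hw hw0
  obtain ⟨c, rfl⟩ := Submodule.mem_span_singleton.1 hw
  have hc : 0 < c * starRingEnd ℂ c := by
    rw [Complex.mul_conj]
    exact_mod_cast Complex.normSq_pos.2 (left_ne_zero_of_smul hw0)
  calc h (c • v) (c • v) = c * starRingEnd ℂ c * h v v := by
        simp only [LinearMap.map_smulₛₗ, LinearMap.smul_apply, smul_eq_mul, RingHom.id_apply]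
        ring
    _ < 0 := mul_neg_of_pos_of_neg hc hv

theorem IsNegDefOn.sup (hh : h.IsSymm) {S T : Submodule ℂ V}
    (hS : IsNegDefOn (fun v => h v v) S) (hT : IsNegDefOn (fun v => h v v) T)
    (hST : ∀ s ∈ S, ∀ t ∈ T, h s t = 0) : IsNegDefOn (fun v => h v v) (S ⊔ T) := by
  intro v hv hv0
  obtain ⟨s, hs, t, ht, rfl⟩ := Submodule.mem_sup.1 hv
  have hst : h (s + t) (s + t) = h s s + h t t := by
    simp [hST s hs t ht, hh.eq_iff.1 (hST s hs t ht)]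
  change h (s + t) (s + t) < 0
  rw [hst]
  rcases eq_or_ne s 0 with rfl | hs0
  · simpa using hT t ht (by simpa using hv0)
  · exact add_neg_of_neg_of_nonpos (hS s hs hs0) (hT.apply_self_nonpos ht)

variable [FiniteDimensional ℂ V]

theorem apply_self_nonneg_of_orthogonal_maximal (hh : h.IsSymm) {N : Submodule ℂ V}
    (hN : IsNegDefOn (fun v => h v v) N)
    (hmax : Module.finrank ℂ N = negIndex (fun v => h v v))
    {v : V} (hv : ∀ u ∈ N, h u v = 0) : 0 ≤ h v v := by
  by_contra hnonneg
  have hneg : h v v < 0 := by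
    obtain ⟨r, hr⟩ := Complex.conj_eq_iff_real.1 (hh.eq v v)
    rw [hr] at hnonneg ⊢
    exact_mod_cast lt_of_not_ge (by exact_mod_cast hnonneg)
  have hvN : v ∉ N := fun hvN => hneg.ne (hv v hvN)
  have hsup : IsNegDefOn (fun v => h v v) (N ⊔ Submodule.span ℂ {v}) := by
    refine hN.sup hh (isNegDefOn_span_singleton hneg) fun u hu w hw => ?_
    obtain ⟨c, rfl⟩ := Submodule.mem_span_singleton.1 hw
    simp [hv u hu]
  have hlt : N < N ⊔ Submodule.span ℂ {v} := by
    simpa [left_lt_sup, Submodule.span_singleton_le_iff_mem] using hvN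
  exact (Submodule.finrank_lt_finrank_of_lt hlt).not_ge (hmax ▸ hsup.finrank_le_negIndex)

theorem exists_linearMap_nonneg_ker (hh : h.IsSymm) :
    ∃ T : V →ₗ[ℂ] (Fin (negIndex fun v => h v v) → ℂ), ∀ v, T v = 0 → 0 ≤ h v v := by
  obtain ⟨N, hN, hmax⟩ := exists_isNegDefOn_finrank_eq_negIndex fun v => h v v
  let b := Module.finBasisOfFinrankEq ℂ N hmax
  refine ⟨LinearMap.pi fun j => h (b j), fun v hv => ?_⟩
  refine apply_self_nonneg_of_orthogonal_maximal hh hN hmax fun u hu => ?_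
  have horth : (h.flip v).domRestrict N = 0 := b.ext fun j => congrFun hv j
  exact LinearMap.congr_fun horth ⟨u, hu⟩

end Hermitian

theorem negIndex_pi {ι : Type*} [Fintype ι] {V : ι → Type*} [∀ l, AddCommGroup (V l)]
    [∀ l, Module ℂ (V l)] [∀ l, FiniteDimensional ℂ (V l)]
    {h : ∀ l, V l →ₛₗ[starRingEnd ℂ] V l →ₗ[ℂ] ℂ} (hh : ∀ l, (h l).IsSymm) :
    negIndex (fun v : ∀ l, V l => ∑ l, h l (v l) (v l)) =
      ∑ l, negIndex (fun v : V l => h l v v) := by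
  apply le_antisymm
  · choose T hT using fun l => exists_linearMap_nonneg_ker (hh l)
    refine (negIndex_le_finrank_of_nonneg_ker (LinearMap.piMap T) fun v hv =>
      Finset.sum_nonneg fun l _ => hT l _ (congrFun hv l)).trans_eq ?_
    simp [Module.finrank_pi_fintype]
  · choose N hN hmax using fun l => exists_isNegDefOn_finrank_eq_negIndex fun v : V l => h l v v
    simp only [← hmax, ← Module.finrank_pi_fintype]
    refine finrank_le_negIndex_of_injective (T := LinearMap.piMap fun l => (N l).subtype)
      (Function.Injective.piMap fun l => (N l).subtype_injective) fun v hv => ?_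
    obtain ⟨l, hl⟩ := Function.ne_iff.1 hv
    exact Finset.sum_neg' (fun j _ => (hN j).apply_self_nonpos (v j).2)
      ⟨l, Finset.mem_univ l, hN l _ (v l).2 (by simpa using hl)⟩

section GraphTriple

variable {V : Type*} [AddCommGroup V] [Module ℂ V] {σ : V →ₛₗ[starRingEnd ℂ] V →ₗ[ℂ] ℂ}
  {P : Submodule ℂ V} {M T : V →ₗ[ℂ] V}

theorem mem_prod_sup_graph_iff (hTP : P ≤ P.comap T) {v : V × V} :
    v ∈ P.prod P ⊔ T.graph ↔ v.2 - T v.1 ∈ P := by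
  rw [Submodule.mem_sup]
  constructor
  · rintro ⟨a, ha, b, hb, rfl⟩
    rw [LinearMap.mem_graph_iff] at hb
    have hab : (a + b).2 - T (a + b).1 = a.2 - T a.1 := by simp [hb]
    exact hab ▸ P.sub_mem ha.2 (hTP ha.1)
  · intro hv
    exact ⟨(0, v.2 - T v.1), ⟨P.zero_mem, hv⟩, (v.1, T v.1),
      (T.mem_graph_iff _).2 rfl, by ext <;> simp⟩

/-- The domain of the Maslov form of `(P × P, Γ(M), Γ(T))`, for `P` invariant under `T`, as the
space of those `x` with `M x - T x ∈ P`; `x` stands for the point `(x, M x)` of `Γ(M)`. -/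
def graphTripleEquiv (M : V →ₗ[ℂ] V) (hTP : P ≤ P.comap T) :
    ↥(M.graph ⊓ (P.prod P ⊔ T.graph)) ≃ₗ[ℂ] ↥(P.comap (M - T)) where
  toFun v := ⟨v.1.1, by
    have hM : v.1.2 = M v.1.1 := v.2.1
    simpa [hM] using (mem_prod_sup_graph_iff hTP).1 v.2.2⟩
  invFun x := ⟨(x, M x), (M.mem_graph_iff _).2 rfl, (mem_prod_sup_graph_iff hTP).2 x.2⟩
  map_add' _ _ := rfl
  map_smul' _ _ := rfl
  left_inv v := Subtype.ext (Prod.ext rfl ((M.mem_graph_iff _).1 v.2.1).symm)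
  right_inv _ := rfl

/-- The sesquilinear form `(x, y) ↦ σ (M x) (T y) - σ x y` on `{x | M x - T x ∈ P}`, whose diagonal
is the Maslov form of `(P × P, Γ(M), Γ(T))` when `P` is isotropic and `T` preserves `σ`. -/
def graphMaslovForm (σ : V →ₛₗ[starRingEnd ℂ] V →ₗ[ℂ] ℂ) (P : Submodule ℂ V) (M T : V →ₗ[ℂ] V) :
    ↥(P.comap (M - T)) →ₛₗ[starRingEnd ℂ] ↥(P.comap (M - T)) →ₗ[ℂ] ℂ :=
  ((σ.comp M).compl₂ T - σ).domRestrict₁₂ _ _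

theorem graphMaslovForm_apply (x y : ↥(P.comap (M - T))) :
    graphMaslovForm σ P M T x y = σ (M x) (T y) - σ (x : V) y :=
  rfl

theorem sesqProd_neg_eq_graphMaslovForm (hP : P ≤ sesqOrth σ P) (hTP : P ≤ P.comap T)
    (hT : ∀ x y, σ (T x) (T y) = σ x y) (v : ↥(M.graph ⊓ (P.prod P ⊔ T.graph)))
    {a b : V × V} (ha : a ∈ P.prod P) (hb : b ∈ T.graph) (hv : (v : V × V) = a + b) :
    sesqProd (-σ) σ a b =
      graphMaslovForm σ P M T (graphTripleEquiv M hTP v) (graphTripleEquiv M hTP v) := by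
  have hM : M v.1.1 = a.2 + b.2 := by rw [← (M.mem_graph_iff _).1 v.2.1, hv, Prod.snd_add]
  have hT' : b.2 = T b.1 := (T.mem_graph_iff _).1 hb
  have hfst : v.1.1 = a.1 + b.1 := by rw [hv, Prod.fst_add]
  have haa : σ a.1 a.1 = 0 := hP ha.1 _ ha.1
  have haT : σ a.2 (T a.1) = 0 := hP ha.2 _ (hTP ha.1)
  change -σ a.1 b.1 + σ a.2 b.2 = σ (M v.1.1) (T v.1.1) - σ v.1.1 v.1.1
  rw [hM, hfst, hT']
  simp only [map_add, LinearMap.add_apply, hT, haa, haT]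
  ring

theorem maslovIndexC_graph_eq_negIndex (hP : P ≤ sesqOrth σ P) (hTP : P ≤ P.comap T)
    (hT : ∀ x y, σ (T x) (T y) = σ x y) :
    maslovIndexC (sesqProd (-σ) σ) (P.prod P) M.graph T.graph =
      negIndex (fun x => graphMaslovForm σ P M T x x) :=
  (maslovIndexC_eq_negIndex _ fun v _ ha _ hb hv =>
    sesqProd_neg_eq_graphMaslovForm hP hTP hT v ha hb hv).trans
      (negIndex_congr (graphTripleEquiv M hTP) fun _ => rfl)

-- Expand `σ (M x - T x) (M y - T y) = 0`.
theorem graphMaslovForm_isSymm (hσ : ∀ x y, starRingEnd ℂ (σ x y) = -σ y x)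
    (hP : P ≤ sesqOrth σ P) (hM : ∀ x y, σ (M x) (M y) = σ x y)
    (hT : ∀ x y, σ (T x) (T y) = σ x y) : (graphMaslovForm σ P M T).IsSymm where
  eq x y := by
    have hxy : σ (M y - T y) (M x - T x) = 0 := hP y.2 _ x.2
    simp only [map_sub, LinearMap.sub_apply, hM, hT] at hxy
    rw [graphMaslovForm_apply, graphMaslovForm_apply, map_sub, hσ, hσ]
    linear_combination hxy

end GraphTriple

section UnitaryDFT

theorem sum_inv_pow_mul_pow_eq_ite {K : Type*} [Field K] {k : ℕ} {ω : K}
    (hω : IsPrimitiveRoot ω k) (i j : Fin k) :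
    ∑ l : Fin k, ω⁻¹ ^ ((l : ℕ) * (i : ℕ)) * ω ^ ((j : ℕ) * (l : ℕ)) =
      if i = j then (k : K) else 0 := by
  have hω0 : ω ≠ 0 := hω.ne_zero i.pos.ne'
  have hgeom : ∑ l : Fin k, ω⁻¹ ^ ((l : ℕ) * (i : ℕ)) * ω ^ ((j : ℕ) * (l : ℕ)) =
      ∑ l ∈ Finset.range k, ((ω ^ (i : ℕ))⁻¹ * ω ^ (j : ℕ)) ^ l := by
    rw [← Fin.sum_univ_eq_sum_range]
    refine Finset.sum_congr rfl fun l _ => ?_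
    rw [mul_comm (l : ℕ), pow_mul, pow_mul, ← mul_pow, inv_pow]
  rw [hgeom]
  split_ifs with hij
  · simp [hij, inv_mul_cancel₀ (pow_ne_zero _ hω0)]
  · have hne : (ω ^ (i : ℕ))⁻¹ * ω ^ (j : ℕ) ≠ 1 := fun h =>
      hij (Fin.ext (hω.pow_inj i.2 j.2 ((inv_mul_eq_one₀ (pow_ne_zero _ hω0)).1 h)))
    have hpow : ((ω ^ (i : ℕ))⁻¹ * ω ^ (j : ℕ)) ^ k = 1 := by
      rw [mul_pow, inv_pow, ← pow_mul, ← pow_mul, mul_comm (i : ℕ), mul_comm (j : ℕ), pow_mul,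
        pow_mul, hω.pow_eq_one]
      simp
    rw [geom_sum_eq hne, hpow, sub_self, zero_div]

variable {W : Type*} [AddCommGroup W] [Module ℂ W] {k : ℕ} {ω : ℂ}

/-- The discrete Fourier transform `x ↦ (k^{-1/2} ∑ i, ω^{il} x_i)_l` on `W^k` attached to `ω`;
the normalization makes it unitary when `ω` is a primitive `k`-th root of unity. -/
def unitaryDFT (ω : ℂ) : (Fin k → W) →ₗ[ℂ] (Fin k → W) :=
  LinearMap.pi fun l => ((√k : ℝ) : ℂ)⁻¹ • ∑ i : Fin k, ω ^ ((i : ℕ) * (l : ℕ)) • LinearMap.proj i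

theorem unitaryDFT_apply (x : Fin k → W) (l : Fin k) :
    unitaryDFT ω x l = ((√k : ℝ) : ℂ)⁻¹ • ∑ i : Fin k, ω ^ ((i : ℕ) * (l : ℕ)) • x i := by
  simp [unitaryDFT]

theorem unitaryDFT_inv_unitaryDFT (hω : IsPrimitiveRoot ω k) (x : Fin k → W) :
    unitaryDFT ω⁻¹ (unitaryDFT ω x) = x := by
  funext i
  have hsqrt : ((√k : ℝ) : ℂ)⁻¹ * ((√k : ℝ) : ℂ)⁻¹ * k = 1 := by
    have hk : (k : ℝ) ≠ 0 := Nat.cast_ne_zero.2 i.pos.ne'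
    rw [← mul_inv, ← Complex.ofReal_mul, Real.mul_self_sqrt k.cast_nonneg]
    exact_mod_cast inv_mul_cancel₀ hk
  calc unitaryDFT ω⁻¹ (unitaryDFT ω x) i
      = (((√k : ℝ) : ℂ)⁻¹ * ((√k : ℝ) : ℂ)⁻¹) • ∑ j : Fin k,
          (∑ l : Fin k, ω⁻¹ ^ ((l : ℕ) * (i : ℕ)) * ω ^ ((j : ℕ) * (l : ℕ))) • x j := by
        simp only [unitaryDFT_apply, Finset.smul_sum, Finset.sum_smul, smul_smul]
        rw [Finset.sum_comm]
        refine Finset.sum_congr rfl fun j _ => Finset.sum_congr rfl fun l _ => ?_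
        congr 1
        ring
    _ = x i := by
        simp only [sum_inv_pow_mul_pow_eq_ite hω, ite_smul, zero_smul, Finset.sum_ite_eq,
          Finset.mem_univ, if_true, smul_smul, hsqrt, one_smul]

theorem unitaryDFT_unitaryDFT_inv (hω : IsPrimitiveRoot ω k) (x : Fin k → W) :
    unitaryDFT ω (unitaryDFT ω⁻¹ x) = x := by
  simpa only [inv_inv] using unitaryDFT_inv_unitaryDFT hω.inv x

theorem sesqPi_apply (f : W →ₛₗ[starRingEnd ℂ] W →ₗ[ℂ] ℂ) (x y : Fin k → W) :
    sesqPi k f x y = ∑ i, f (x i) (y i) :=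
  rfl

theorem sesqPi_unitaryDFT_left (f : W →ₛₗ[starRingEnd ℂ] W →ₗ[ℂ] ℂ) (hω : ‖ω‖ = 1)
    (x y : Fin k → W) : sesqPi k f (unitaryDFT ω x) y = sesqPi k f x (unitaryDFT ω⁻¹ y) := by
  simp only [sesqPi_apply, unitaryDFT_apply, LinearMap.map_smulₛₗ, map_sum, LinearMap.sum_apply,
    LinearMap.smul_apply, map_pow, map_inv₀, Complex.conj_ofReal, RingHom.id_apply,
    ← Complex.inv_eq_conj hω, ← Finset.smul_sum]
  rw [Finset.sum_comm]
  simp only [mul_comm]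

theorem sesqPi_unitaryDFT (f : W →ₛₗ[starRingEnd ℂ] W →ₗ[ℂ] ℂ) [NeZero k]
    (hω : IsPrimitiveRoot ω k) (x y : Fin k → W) :
    sesqPi k f (unitaryDFT ω x) (unitaryDFT ω y) = sesqPi k f x y := by
  rw [sesqPi_unitaryDFT_left f (hω.norm'_eq_one (NeZero.ne k)), unitaryDFT_inv_unitaryDFT hω]

theorem pow_smul_unitaryDFT_shift [NeZero k] (hω : ω ^ k = 1) (x : Fin k → W) (l : Fin k) :
    ω ^ (l : ℕ) • unitaryDFT ω (LinearMap.funLeft ℂ W (fun i : Fin k => i + 1) x) l =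
      unitaryDFT ω x l := by
  have hpow (i : Fin k) : ω ^ ((i + 1 : Fin k) : ℕ) = ω ^ ((i : ℕ) + 1) := by
    rw [Fin.val_add, Fin.val_one', Nat.add_mod_mod, ← pow_eq_pow_mod _ hω]
  rw [unitaryDFT_apply, unitaryDFT_apply, smul_comm, Finset.smul_sum,
    ← Equiv.sum_comp (Equiv.addRight (1 : Fin k)) fun i => ω ^ ((i : ℕ) * (l : ℕ)) • x i]
  refine congrArg _ (Finset.sum_congr rfl fun i _ => ?_)
  rw [LinearMap.funLeft_apply, smul_smul, Equiv.coe_addRight, pow_mul _ ((i + 1 : Fin k) : ℕ),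
    hpow, ← pow_mul, ← pow_add]
  congr 2
  ring

theorem unitaryDFT_compLeft (M : W →ₗ[ℂ] W) (x : Fin k → W) (l : Fin k) :
    unitaryDFT ω (M.compLeft (Fin k) x) l = M (unitaryDFT ω x l) := by
  simp [unitaryDFT_apply]

theorem unitaryDFT_mem_pi {P : Submodule ℂ W} {x : Fin k → W}
    (hx : x ∈ Submodule.pi Set.univ fun _ => P) :
    unitaryDFT ω x ∈ Submodule.pi Set.univ fun _ => P := by
  intro l _
  rw [unitaryDFT_apply]
  exact P.smul_mem _ (P.sum_mem fun i _ => P.smul_mem _ (hx i trivial))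

theorem unitaryDFT_mem_pi_iff {P : Submodule ℂ W} (hω : IsPrimitiveRoot ω k) {x : Fin k → W} :
    unitaryDFT ω x ∈ (Submodule.pi Set.univ fun _ => P) ↔ x ∈ Submodule.pi Set.univ fun _ => P :=
  ⟨fun hx => unitaryDFT_inv_unitaryDFT hω x ▸ unitaryDFT_mem_pi hx, unitaryDFT_mem_pi⟩

end UnitaryDFT

section Iteration

variable {W : Type*} [AddCommGroup W] [Module ℂ W] {k : ℕ} {ω : ℂ}
  {σ : W →ₛₗ[starRingEnd ℂ] W →ₗ[ℂ] ℂ} {P : Submodule ℂ W} {M : W →ₗ[ℂ] W}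

local notation "Pᵏ" => Submodule.pi Set.univ (fun _ : Fin k => P)

theorem pi_le_sesqOrth (hP : P ≤ sesqOrth σ P) :
    Pᵏ ≤ sesqOrth (sesqPi k σ) Pᵏ :=
  fun x hx y hy => show ∑ i, σ (x i) (y i) = 0 from
    Finset.sum_eq_zero fun i _ => hP (hx i trivial) _ (hy i trivial)

variable [NeZero k]

local notation "shift" => LinearMap.funLeft ℂ W (fun i : Fin k => i + 1)

theorem sesqPi_shift (x y : Fin k → W) : sesqPi k σ (shift x) (shift y) = sesqPi k σ x y :=
  Equiv.sum_comp (Equiv.addRight (1 : Fin k)) fun i => σ (x i) (y i)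

theorem pi_le_comap_shift : Pᵏ ≤ (Pᵏ).comap shift :=
  fun _ hx i _ => hx (i + 1) trivial

theorem pow_smul_sub_id_unitaryDFT (hω : IsPrimitiveRoot ω k) (x : Fin k → W) (l : Fin k) :
    (ω ^ (l : ℕ) • M - LinearMap.id : W →ₗ[ℂ] W) (unitaryDFT ω x l) =
      ω ^ (l : ℕ) • unitaryDFT ω ((M.compLeft (Fin k) - shift) x) l := by
  rw [LinearMap.sub_apply (M.compLeft _), map_sub, Pi.sub_apply, smul_sub,
    pow_smul_unitaryDFT_shift hω.pow_eq_one, unitaryDFT_compLeft]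
  rfl

theorem unitaryDFT_mem_comap_iff (hω : IsPrimitiveRoot ω k) {x : Fin k → W} :
    (∀ l : Fin k, unitaryDFT ω x l ∈ P.comap (ω ^ (l : ℕ) • M - LinearMap.id)) ↔
      x ∈ (Pᵏ).comap (M.compLeft (Fin k) - shift) := by
  have hω0 (l : Fin k) : ω ^ (l : ℕ) ≠ 0 := pow_ne_zero _ (hω.ne_zero (NeZero.ne k))
  simp only [Submodule.mem_comap, pow_smul_sub_id_unitaryDFT hω, P.smul_mem_iff (hω0 _)]
  rw [← unitaryDFT_mem_pi_iff hω]
  simp only [Submodule.mem_pi, Set.mem_univ, true_imp_iff]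

variable (P M) in
/-- The unitary discrete Fourier transform, restricted to the domain of the Maslov form of the
iterated system and split into the domains of the Maslov forms of its `k` components. -/
def iterationSplitEquiv (hω : IsPrimitiveRoot ω k) :
    ↥((Pᵏ).comap (M.compLeft (Fin k) - shift)) ≃ₗ[ℂ]
      ((l : Fin k) → ↥(P.comap (ω ^ (l : ℕ) • M - LinearMap.id))) where
  toFun x l := ⟨unitaryDFT ω x l, (unitaryDFT_mem_comap_iff hω).2 x.2 l⟩
  invFun y := ⟨unitaryDFT ω⁻¹ fun l => (y l : W), (unitaryDFT_mem_comap_iff hω).1 fun l => by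
    rw [unitaryDFT_unitaryDFT_inv hω]
    exact (y l).2⟩
  map_add' x y := by
    ext : 2
    simp
  map_smul' c x := by
    ext : 2
    simp
  left_inv x := Subtype.ext (unitaryDFT_inv_unitaryDFT hω (x : Fin k → W))
  right_inv y := funext fun l =>
    Subtype.ext (congrFun (unitaryDFT_unitaryDFT_inv hω fun l => (y l : W)) l)

theorem graphMaslovForm_sesqPi_eq_sum (hω : IsPrimitiveRoot ω k)
    (x y : ↥((Pᵏ).comap (M.compLeft (Fin k) - shift))) :
    graphMaslovForm (sesqPi k σ) Pᵏ (M.compLeft (Fin k)) shift x y =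
      ∑ l : Fin k, graphMaslovForm σ P (ω ^ (l : ℕ) • M) LinearMap.id
        (iterationSplitEquiv P M hω x l) (iterationSplitEquiv P M hω y l) := by
  have hnorm (l : Fin k) : starRingEnd ℂ (ω ^ (l : ℕ)) * ω ^ (l : ℕ) = 1 := by
    rw [Complex.conj_mul', norm_pow, hω.norm'_eq_one (NeZero.ne k)]
    simp
  have hmixed (l : Fin k) : σ (ω ^ (l : ℕ) • M (unitaryDFT ω x l)) (unitaryDFT ω y l) =
      σ (unitaryDFT ω (M.compLeft (Fin k) x) l) (unitaryDFT ω (shift y) l) := by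
    rw [unitaryDFT_compLeft, ← pow_smul_unitaryDFT_shift hω.pow_eq_one (y : Fin k → W)]
    simp only [LinearMap.map_smulₛₗ, LinearMap.smul_apply, smul_eq_mul, RingHom.id_apply]
    linear_combination σ (M (unitaryDFT ω x l)) (unitaryDFT ω (shift y) l) * hnorm l
  rw [graphMaslovForm_apply, ← sesqPi_unitaryDFT σ hω, ← sesqPi_unitaryDFT σ hω (x : Fin k → W),
    sesqPi_apply, sesqPi_apply, ← Finset.sum_sub_distrib]
  exact Finset.sum_congr rfl fun l _ =>
    congrArg (· - σ (unitaryDFT ω x l) (unitaryDFT ω y l)) (hmixed l).symm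

theorem apply_smul_apply_smul_of_norm_eq_one (hM : ∀ x y, σ (M x) (M y) = σ x y) {α : ℂ}
    (hα : ‖α‖ = 1) (x y : W) : σ ((α • M) x) ((α • M) y) = σ x y := by
  simp only [LinearMap.smul_apply, LinearMap.map_smulₛₗ, smul_eq_mul, RingHom.id_apply, hM]
  rw [← mul_assoc, Complex.mul_conj', hα]
  simp

theorem maslovIndexC_iteration_eq_sum [FiniteDimensional ℂ W]
    (hσ : ∀ x y, starRingEnd ℂ (σ x y) = -σ y x) (hP : P ≤ sesqOrth σ P)
    (hM : ∀ x y, σ (M x) (M y) = σ x y) (hω : IsPrimitiveRoot ω k) :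
    maslovIndexC (sesqProd (-sesqPi k σ) (sesqPi k σ))
        ((Pᵏ).prod Pᵏ) (M.compLeft (Fin k)).graph (shift).graph =
      ∑ l : Fin k, maslovIndexC (sesqProd (-σ) σ) (P.prod P) (ω ^ (l : ℕ) • M).graph
        (LinearMap.id : W →ₗ[ℂ] W).graph := by
  have hnorm (l : Fin k) : ‖ω ^ (l : ℕ)‖ = 1 := by
    rw [norm_pow, hω.norm'_eq_one (NeZero.ne k), one_pow]
  rw [maslovIndexC_graph_eq_negIndex (pi_le_sesqOrth hP) pi_le_comap_shift sesqPi_shift,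
    negIndex_congr (iterationSplitEquiv P M hω)
      (q' := fun y => ∑ l : Fin k, graphMaslovForm σ P (ω ^ (l : ℕ) • M) LinearMap.id (y l) (y l))
      fun x => (graphMaslovForm_sesqPi_eq_sum hω x x).symm,
    negIndex_pi fun l => graphMaslovForm_isSymm hσ hP
      (apply_smul_apply_smul_of_norm_eq_one hM (hnorm l)) fun _ _ => rfl]
  exact Finset.sum_congr rfl fun l _ =>
    (maslovIndexC_graph_eq_negIndex hP le_rfl fun _ _ => rfl).symm

theorem maslov_form_iteration_splitting_general [FiniteDimensional ℂ W]
    (hσ : ∀ x y, starRingEnd ℂ (σ x y) = -σ y x) (hP : P ≤ sesqOrth σ P)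
    (hM : ∀ x y, σ (M x) (M y) = σ x y) (hω : IsPrimitiveRoot ω k) :
    (∃ e : ↥((M.compLeft (Fin k)).graph ⊓ ((Pᵏ).prod Pᵏ ⊔ (shift).graph)) ≃ₗ[ℂ]
        ((l : Fin k) → ↥((ω ^ (l : ℕ) • M).graph ⊓
          (P.prod P ⊔ (LinearMap.id : W →ₗ[ℂ] W).graph))),
      ∀ (v : ↥((M.compLeft (Fin k)).graph ⊓ ((Pᵏ).prod Pᵏ ⊔ (shift).graph)))
        (a b : (Fin k → W) × (Fin k → W)),
        a ∈ (Pᵏ).prod Pᵏ → b ∈ (shift).graph →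
        (v : (Fin k → W) × (Fin k → W)) = a + b →
        ∀ A B : Fin k → W × W, (∀ l, A l ∈ P.prod P) →
          (∀ l, B l ∈ (LinearMap.id : W →ₗ[ℂ] W).graph) → (∀ l, (e v l : W × W) = A l + B l) →
          sesqProd (-sesqPi k σ) (sesqPi k σ) a b = ∑ l, sesqProd (-σ) σ (A l) (B l)) ∧
    maslovIndexC (sesqProd (-sesqPi k σ) (sesqPi k σ))
        ((Pᵏ).prod Pᵏ) (M.compLeft (Fin k)).graph (shift).graph =
      ∑ l : Fin k, maslovIndexC (sesqProd (-σ) σ) (P.prod P) (ω ^ (l : ℕ) • M).graph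
        (LinearMap.id : W →ₗ[ℂ] W).graph := by
  let toComponent (l : Fin k) := graphTripleEquiv (P := P) (ω ^ (l : ℕ) • M) (T := .id) le_rfl
  refine ⟨⟨graphTripleEquiv (M.compLeft (Fin k)) pi_le_comap_shift ≪≫ₗ
    iterationSplitEquiv P M hω ≪≫ₗ (LinearEquiv.piCongrRight toComponent).symm, ?_⟩,
    maslovIndexC_iteration_eq_sum hσ hP hM hω⟩
  intro v a b ha hb hv A B hA hB hAB
  rw [sesqProd_neg_eq_graphMaslovForm (pi_le_sesqOrth hP) pi_le_comap_shift sesqPi_shift v ha hb hv,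
    graphMaslovForm_sesqPi_eq_sum hω]
  refine Finset.sum_congr rfl fun l _ => ?_
  rw [sesqProd_neg_eq_graphMaslovForm hP le_rfl (fun _ _ => rfl) _ (hA l) (hB l) (hAB l)]
  rfl

end Iteration

section StandardSymplectic

variable {n : ℕ}

theorem sigmaC_apply (x y : CV n) : sigmaC n x y =
    (∑ i : Fin n, starRingEnd ℂ (x (Sum.inl i)) * y (Sum.inr i)) -
      ∑ i : Fin n, starRingEnd ℂ (x (Sum.inr i)) * y (Sum.inl i) :=
  rfl

theorem conj_sigmaC (x y : CV n) : starRingEnd ℂ (sigmaC n x y) = -sigmaC n y x := by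
  simp only [sigmaC_apply, map_sub, map_sum, map_mul, Complex.conj_conj, neg_sub, mul_comm]

theorem PiV_le_sesqOrth : PiV n ≤ sesqOrth (sigmaC n) (PiV n) := by
  intro x hx y hy
  have hx' : ∀ i, x (Sum.inr i) = 0 := hx
  have hy' : ∀ i, y (Sum.inr i) = 0 := hy
  simp [sigmaC_apply, hx', hy']

theorem sigmaC_eq_dotProduct_mulVec (x y : CV n) :
    sigmaC n x y = star x ⬝ᵥ ((symplJ n).map Complex.ofReal).transpose.mulVec y := by
  simp [sigmaC_apply, symplJ, dotProduct, Matrix.mulVec, Fintype.sum_sum_type, Matrix.one_apply,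
    apply_ite, ite_mul, sub_eq_add_neg]

theorem sigmaC_cAction_cAction {Θ : Matrix (Fin n ⊕ Fin n) (Fin n ⊕ Fin n) ℝ}
    (hΘ : Θ.transpose * symplJ n * Θ = symplJ n) (x y : CV n) :
    sigmaC n (cAction Θ x) (cAction Θ y) = sigmaC n x y := by
  have hsympl : (Θ.map Complex.ofReal).transpose * ((symplJ n).map Complex.ofReal).transpose *
      Θ.map Complex.ofReal = ((symplJ n).map Complex.ofReal).transpose := by
    have hmap := congrArg (fun A => A.transpose.map Complex.ofRealHom) hΘ
    simp only [Matrix.transpose_mul, Matrix.transpose_transpose, Matrix.map_mul] at hmap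
    rwa [← Matrix.mul_assoc] at hmap
  have hstar : star ((Θ.map Complex.ofReal).mulVec x) =
      Matrix.vecMul (star x) (Θ.map Complex.ofReal).transpose := by
    rw [Matrix.star_mulVec]
    congr 1
    ext i j
    simp [Matrix.conjTranspose_apply]
  rw [sigmaC_eq_dotProduct_mulVec, sigmaC_eq_dotProduct_mulVec, cAction, Matrix.mulVecLin_apply,
    Matrix.mulVecLin_apply, hstar, ← Matrix.dotProduct_mulVec, Matrix.mulVec_mulVec,
    Matrix.mulVec_mulVec, hsympl]

end StandardSymplectic

/-- the Maslov form `m(Π^{2k}, Γ, Δ^↺)` of the iterated system is linearly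
isometric to the direct sum `⊕_{l=0}^{k−1} m(Π², Γ(ω^lΘ), Δ)`; in particular the
negative Maslov indices add up. -/
theorem maslov_form_iteration_splitting
    (n k : ℕ) [NeZero k] (Θ : Matrix (Fin n ⊕ Fin n) (Fin n ⊕ Fin n) ℝ)
    (hΘ : Θ.transpose * symplJ n * Θ = symplJ n) (hk : 1 ≤ k) (ω : ℂ) (hω : IsPrimitiveRoot ω k) :
    (∃ e : ↥(GamSub n k Θ ⊓ (Pi2kSub n k ⊔ DcycSub n k)) ≃ₗ[ℂ]
        ((l : Fin k) →
          ↥(LinearMap.graph ((ω ^ (l : ℕ)) • cAction Θ) ⊓ (Pi2Sub n ⊔ DiaSub n))),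
      ∀ (v : ↥(GamSub n k Θ ⊓ (Pi2kSub n k ⊔ DcycSub n k)))
        (a b : (Fin k → CV n) × (Fin k → CV n)),
        a ∈ Pi2kSub n k → b ∈ DcycSub n k →
        (v : (Fin k → CV n) × (Fin k → CV n)) = a + b →
        ∀ (A B : Fin k → CV n × CV n),
          (∀ l, A l ∈ Pi2Sub n) → (∀ l, B l ∈ DiaSub n) →
          (∀ l, ((e v l : CV n × CV n)) = A l + B l) →
          bigSigmaC n k a b = ∑ l : Fin k, sigma2C n (A l) (B l)) ∧
    maslovIndexC (bigSigmaC n k) (Pi2kSub n k) (GamSub n k Θ) (DcycSub n k)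
      = ∑ l : Fin k,
          maslovIndexC (sigma2C n) (Pi2Sub n)
            (LinearMap.graph ((ω ^ (l : ℕ)) • cAction Θ)) (DiaSub n) :=
  maslov_form_iteration_splitting_general (σ := sigmaC n) (P := PiV n) (M := cAction Θ)
    conj_sigmaC PiV_le_sesqOrth (sigmaC_cAction_cAction hΘ) hω

end
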